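/- For every connected finite simple graph G of order n > 0, τ(G) ≤ 2·(n − Γ(G)). -/

import Mathlib

/-!
Let `D` be a minimal dominating set. A vertex of `D` with a neighbour in `D` is not its own private
neighbour, so minimality gives it a private neighbour outside `D`; private neighbours of distinct
vertices are distinct. Hence the set `A` of vertices of `D` that are not isolated in `G[D]` has at
most `n - |D|` elements. Every edge inside `D` has both ends in `A`, so `Dᶜ ∪ A` is a vertex cover
with at most `2 (n - |D|)` vertices. Taking `|D| = Γ(G)` gives the bound.
-/

/-- `D` is a dominating set of `G`: every vertex is in `D` or has a neighbour in `D`. -/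
def IsDomSet {V : Type*} (G : SimpleGraph V) (D : Finset V) : Prop :=
  ∀ v : V, v ∈ D ∨ ∃ u ∈ D, G.Adj u v

/-- `D` is a minimal dominating set of `G`. -/
def IsMinDomSet {V : Type*} (G : SimpleGraph V) (D : Finset V) : Prop :=
  IsDomSet G D ∧ ∀ D' : Finset V, D' ⊂ D → ¬ IsDomSet G D'

/-- The upper domination number `Γ(G)`: maximum cardinality of a minimal dominating set. -/
noncomputable def upperDomNum {V : Type*} [Fintype V] (G : SimpleGraph V) : ℕ :=
  sSup {n : ℕ | ∃ D : Finset V, IsMinDomSet G D ∧ D.card = n}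

/-- `C` is a vertex cover of `G`. -/
def IsVertexCover {V : Type*} (G : SimpleGraph V) (C : Finset V) : Prop :=
  ∀ u v : V, G.Adj u v → u ∈ C ∨ v ∈ C

/-- The vertex cover number `τ(G)`: minimum cardinality of a vertex cover. -/
noncomputable def tauNum {V : Type*} [Fintype V] (G : SimpleGraph V) : ℕ :=
  sInf {n : ℕ | ∃ C : Finset V, IsVertexCover G C ∧ C.card = n}

theorem tauNum_le_card {V : Type*} [Fintype V] {G : SimpleGraph V} {C : Finset V}
    (hC : IsVertexCover G C) : tauNum G ≤ C.card :=
  Nat.sInf_le ⟨C, hC, rfl⟩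

/-- A vertex of a minimal dominating set `D` having a neighbour in `D` has an external private
neighbour, i.e. a vertex outside `D` whose only neighbour in `D` is the given one. -/
theorem IsMinDomSet.exists_private {V : Type*} {G : SimpleGraph V} {D : Finset V}
    (hD : IsMinDomSet G D) {a b : V} (ha : a ∈ D) (hb : b ∈ D) (hab : G.Adj a b) :
    ∃ v, v ∉ D ∧ ∀ u ∈ D, G.Adj u v ↔ u = a := by
  classical
  have h := hD.2 (D.erase a) (Finset.erase_ssubset ha)
  simp only [IsDomSet, not_forall, not_or, not_exists, not_and] at h
  obtain ⟨v, hv, hpriv⟩ := h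
  have hva : v ≠ a := by
    rintro rfl
    exact hpriv b (Finset.mem_erase.2 ⟨hab.ne', hb⟩) hab.symm
  have hvD : v ∉ D := fun h => hv (Finset.mem_erase.2 ⟨hva, h⟩)
  have hpriv' : ∀ u ∈ D, G.Adj u v → u = a := fun u hu huv => by
    by_contra hne
    exact hpriv u (Finset.mem_erase.2 ⟨hne, hu⟩) huv
  obtain ⟨u, hu, huv⟩ := (hD.1 v).resolve_left hvD
  have hua := hpriv' u hu huv
  subst hua
  exact ⟨v, hvD, fun w hw => ⟨hpriv' w hw, fun h => h ▸ huv⟩⟩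

theorem IsMinDomSet.tauNum_le {V : Type*} [Fintype V] {G : SimpleGraph V} {D : Finset V}
    (hD : IsMinDomSet G D) : tauNum G ≤ 2 * (Fintype.card V - D.card) := by
  classical
  let A := D.filter fun a => ∃ b ∈ D, G.Adj a b
  have hpn : ∀ a ∈ A, ∃ v, v ∉ D ∧ ∀ u ∈ D, G.Adj u v ↔ u = a := by
    intro a ha
    obtain ⟨haD, b, hb, hab⟩ := Finset.mem_filter.1 ha
    exact hD.exists_private haD hb hab
  choose! f hfD hf using hpn
  have hA : A.card ≤ Dᶜ.card := by
    refine Finset.card_le_card_of_injOn f (fun a ha => by simpa using hfD a ha) ?_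
    intro a ha a' ha' h
    have haD := (Finset.mem_filter.1 ha).1
    exact (hf a' ha' a haD).1 (h ▸ (hf a ha a haD).2 rfl)
  have hcov : IsVertexCover G (Dᶜ ∪ A) := by
    intro u v huv
    by_cases hu : u ∈ D
    · by_cases hv : v ∈ D
      · exact Or.inl (Finset.mem_union_right _ (Finset.mem_filter.2 ⟨hu, v, hv, huv⟩))
      · exact Or.inr (Finset.mem_union_left _ (Finset.mem_compl.2 hv))
    · exact Or.inl (Finset.mem_union_left _ (Finset.mem_compl.2 hu))
  have h1 := tauNum_le_card hcov
  have h2 := Finset.card_union_le Dᶜ A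
  have h3 := Finset.card_compl D
  omega

theorem stmt8 {V : Type*} [Fintype V] (G : SimpleGraph V) (hconn : G.Connected)
    (hn : 0 < Fintype.card V) :
    tauNum G ≤ 2 * (Fintype.card V - upperDomNum G) := by
  rcases Set.eq_empty_or_nonempty {n : ℕ | ∃ D : Finset V, IsMinDomSet G D ∧ D.card = n}
    with h | h
  -- Here `Γ(G)` would take the default value `0`, and the whole vertex set is a small enough cover;
  -- this avoids proving that minimal dominating sets exist.
  · have h0 : upperDomNum G = 0 := by rw [upperDomNum, h]; simp
    have h1 : tauNum G ≤ (Finset.univ : Finset V).card :=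
      tauNum_le_card fun u _ _ => Or.inl (Finset.mem_univ u)
    rw [Finset.card_univ] at h1
    omega
  · have hbdd : BddAbove {n : ℕ | ∃ D : Finset V, IsMinDomSet G D ∧ D.card = n} := by
      refine ⟨Fintype.card V, ?_⟩
      rintro _ ⟨D, -, rfl⟩
      exact D.card_le_univ
    obtain ⟨D, hD, hcard⟩ := Nat.sSup_mem h hbdd
    have hΓ : D.card = upperDomNum G := hcard
    exact hΓ ▸ hD.tauNum_le
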